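/- Let s > 3/2. There exists a constant C (depending on φ and s but not on n) such that for every sufficiently large integer n, the functions f_n(x) = 2^{-ns} φ(x) sin((17/12)·2^n x), g_n(x) = 2^{-n} φ(x), and u_0^n = f_n + g_n satisfy ‖(∂_x u_0^n)²‖_{H^s(ℝ)} ≤ C(1 + 2^{-n(s-2)}). -/

import Mathlib

open MeasureTheory Filter

/-- Fourier transform with convention `f̂(ξ) = ∫ f(x) e^{-i x ξ} dx`. -/
noncomputable def fourierT (f : ℝ → ℂ) (ξ : ℝ) : ℂ :=
  ∫ x : ℝ, f x * Complex.exp (-(Complex.I * x * ξ))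

/-- The `H^s(ℝ)` norm, `‖f‖_{H^s}² = ∫ (1+|ξ|²)^s |f̂(ξ)|² dξ`. -/
noncomputable def sobolevNorm (s : ℝ) (f : ℝ → ℂ) : ℝ :=
  Real.sqrt (∫ ξ : ℝ, (1 + ξ ^ 2) ^ s * ‖fourierT f ξ‖ ^ 2)

/-- Membership in `H^s(ℝ)` (for integrable representatives). -/
def MemSobolev (s : ℝ) (f : ℝ → ℂ) : Prop :=
  MeasureTheory.Integrable f ∧
    MeasureTheory.Integrable (fun ξ : ℝ => (1 + ξ ^ 2) ^ s * ‖fourierT f ξ‖ ^ 2)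

/-- The high-frequency functions `f_n(x) = 2^{-ns} φ(x) sin((17/12)·2^n x)`. -/
noncomputable def fn (s : ℝ) (φ : ℝ → ℂ) (n : ℕ) : ℝ → ℂ :=
  fun x => (((2 : ℝ) ^ (-(n : ℝ) * s) * Real.sin (17 / 12 * 2 ^ n * x) : ℝ) : ℂ) * φ x

/-- The low-frequency functions `g_n(x) = 2^{-n} φ(x)`. -/
noncomputable def gn (φ : ℝ → ℂ) (n : ℕ) : ℝ → ℂ :=
  fun x => (((2 : ℝ) ^ (-(n : ℝ)) : ℝ) : ℂ) * φ x

/-- `φ̂` is an even, real-valued, nonnegative function in `C_c^∞(ℝ)` with `φ̂ = 1` on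
`{|ξ| ≤ 1/4}` and `φ̂ = 0` on `{|ξ| ≥ 1/2}`, and `φ` is the (continuous, integrable)
function on `ℝ` whose Fourier transform is `φ̂`. -/
structure CutoffPair (φhat : ℝ → ℝ) (φ : ℝ → ℂ) : Prop where
  smooth : ContDiff ℝ (⊤ : ℕ∞) φhat
  compactSupport : HasCompactSupport φhat
  even : ∀ ξ : ℝ, φhat (-ξ) = φhat ξ
  nonneg : ∀ ξ : ℝ, 0 ≤ φhat ξ
  eq_one : ∀ ξ : ℝ, |ξ| ≤ 1 / 4 → φhat ξ = 1
  eq_zero : ∀ ξ : ℝ, 1 / 2 ≤ |ξ| → φhat ξ = 0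
  continuous : Continuous φ
  integrable : MeasureTheory.Integrable φ
  fourier_eq : ∀ ξ : ℝ, fourierT φ ξ = (φhat ξ : ℂ)

/-! If `u = t^{-s} φ sin(k t x) + t⁻¹ φ` with `t = 2^n`, the double-angle formulas write `(u')²` as
a combination of `φ²`, `φ φ'` and `φ'²`, each multiplied by a power of `t` and by an oscillation of
frequency `0`, `k t` or `2 k t`. Multiplying by an oscillation of frequency `b` costs a factor
`(2 (1 + b²))^{s/2}` in `H^s` (Peetre's inequality), hence `O(t^s)` here. Every resulting power of
`t` is at most `1 + t^{2-s}`; the extreme ones are `t⁰`, from the product of `t⁻¹ φ'` with the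
derivative of the sine, and `t^{2-s}`, from the square of that derivative. -/

open scoped FourierTransform SchwartzMap

section FourierTransform

variable {f g : ℝ → ℂ}

lemma fourierT_eq_fourier (f : ℝ → ℂ) (ξ : ℝ) : fourierT f ξ = 𝓕 f (ξ / (2 * Real.pi)) := by
  rw [Real.fourier_real_eq_integral_exp_smul, fourierT]
  congr 1 with x
  rw [smul_eq_mul, mul_comm]
  congr 2
  push_cast
  have hpi : (Real.pi : ℂ) ≠ 0 := mod_cast Real.pi_ne_zero
  field_simp

lemma continuous_fourierT (hf : Integrable f) : Continuous (fourierT f) := by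
  have hcont : Continuous (𝓕 f) :=
    VectorFourier.fourierIntegral_continuous Real.continuous_fourierChar
      (L := innerₗ ℝ) continuous_inner hf
  rw [funext (fourierT_eq_fourier f)]
  fun_prop

lemma integrable_mul_cexp (hf : Integrable f) (b : ℝ) :
    Integrable fun x : ℝ => f x * Complex.exp (Complex.I * x * b) := by
  refine hf.mul_bdd (c := 1) (by fun_prop) (ae_of_all _ fun x => ?_)
  rw [mul_assoc, ← Complex.ofReal_mul, Complex.norm_exp_I_mul_ofReal]

lemma fourierT_mul_cexp (f : ℝ → ℂ) (b ξ : ℝ) :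
    fourierT (fun x => f x * Complex.exp (Complex.I * x * b)) ξ = fourierT f (ξ - b) := by
  simp only [fourierT]
  congr 1 with x
  rw [mul_assoc, ← Complex.exp_add]
  congr 2
  push_cast
  ring

lemma fourierT_add (hf : Integrable f) (hg : Integrable g) :
    fourierT (f + g) = fourierT f + fourierT g := by
  ext ξ
  have integrable_kernel {h : ℝ → ℂ} (hh : Integrable h) :
      Integrable fun x : ℝ => h x * Complex.exp (-(Complex.I * x * ξ)) := by
    simpa using integrable_mul_cexp hh (-ξ)
  simp only [fourierT, Pi.add_apply, add_mul]
  exact integral_add (integrable_kernel hf) (integrable_kernel hg)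

lemma fourierT_smul (c : ℂ) (f : ℝ → ℂ) : fourierT (c • f) = c • fourierT f := by
  ext ξ
  simp only [fourierT, Pi.smul_apply, smul_eq_mul, mul_assoc, integral_const_mul]

lemma exists_schwartzMap_eq_fourierT (ψ : 𝓢(ℝ, ℂ)) : ∃ ψhat : 𝓢(ℝ, ℂ), ⇑ψhat = fourierT ψ := by
  have hpi : (2 * Real.pi)⁻¹ ≠ 0 := by positivity
  let scale : ℝ ≃L[ℝ] ℝ := ContinuousLinearEquiv.unitsEquivAut ℝ (Units.mk0 _ hpi)
  refine ⟨SchwartzMap.compCLMOfContinuousLinearEquiv ℂ scale (𝓕 ψ), funext fun ξ => ?_⟩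
  simp [scale, fourierT_eq_fourier, SchwartzMap.fourier_coe, div_eq_mul_inv]

lemma exists_schwartzMap_eq_of_fourierT (hcont : Continuous f) (hint : Integrable f)
    (hsmooth : ContDiff ℝ (⊤ : ℕ∞) (fourierT f)) (hsupp : HasCompactSupport (fourierT f)) :
    ∃ Φ : 𝓢(ℝ, ℂ), ⇑Φ = f := by
  have hpi : 2 * Real.pi ≠ 0 := by positivity
  have fourier_eq : 𝓕 f = fun ξ => fourierT f ((2 * Real.pi) • ξ) := by
    ext ξ
    rw [fourierT_eq_fourier, smul_eq_mul, mul_div_cancel_left₀ _ hpi]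
  have fourier_smooth : ContDiff ℝ (⊤ : ℕ∞) (𝓕 f) :=
    fourier_eq ▸ hsmooth.comp (contDiff_const_smul _)
  have fourier_supp : HasCompactSupport (𝓕 f) := fourier_eq ▸ hsupp.comp_smul hpi
  let G : 𝓢(ℝ, ℂ) := fourier_supp.toSchwartzMap fourier_smooth
  have coe_G : ⇑G = 𝓕 f := rfl
  refine ⟨𝓕⁻ G, ?_⟩
  rw [SchwartzMap.fourierInv_coe, coe_G, hcont.fourierInv_fourier_eq hint (coe_G ▸ G.integrable)]

lemma CutoffPair.exists_schwartzMap_eq {φhat : ℝ → ℝ} {φ : ℝ → ℂ} (h : CutoffPair φhat φ) :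
    ∃ Φ : 𝓢(ℝ, ℂ), ⇑Φ = φ := by
  have fourierT_eq : fourierT φ = fun ξ => (φhat ξ : ℂ) := funext h.fourier_eq
  refine exists_schwartzMap_eq_of_fourierT h.continuous h.integrable ?_ ?_
  · exact fourierT_eq ▸ Complex.ofRealCLM.contDiff.comp h.smooth
  · exact fourierT_eq ▸ h.compactSupport.comp_left Complex.ofReal_zero

end FourierTransform

section Sobolev

variable {s : ℝ} {f g : ℝ → ℂ}

/-- The function `(1 + ξ²)^{s/2} f̂(ξ)`, whose `L²` norm is the `H^s` norm of `f`. -/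
noncomputable def weightedFourierT (s : ℝ) (f : ℝ → ℂ) (ξ : ℝ) : ℂ :=
  ((1 + ξ ^ 2) ^ (s / 2) : ℝ) • fourierT f ξ

lemma norm_weightedFourierT (s : ℝ) (f : ℝ → ℂ) (ξ : ℝ) :
    ‖weightedFourierT s f ξ‖ = (1 + ξ ^ 2) ^ (s / 2) * ‖fourierT f ξ‖ := by
  rw [weightedFourierT, norm_smul, Real.norm_of_nonneg (by positivity)]

lemma norm_weightedFourierT_sq (s : ℝ) (f : ℝ → ℂ) (ξ : ℝ) :
    ‖weightedFourierT s f ξ‖ ^ 2 = (1 + ξ ^ 2) ^ s * ‖fourierT f ξ‖ ^ 2 := by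
  rw [norm_weightedFourierT, mul_pow, ← Real.rpow_mul_natCast (by positivity)]
  norm_num

lemma aestronglyMeasurable_weightedFourierT (hf : Integrable f) :
    AEStronglyMeasurable (weightedFourierT s f) := by
  have weight_continuous : Continuous fun ξ : ℝ => (1 + ξ ^ 2) ^ (s / 2) :=
    (by fun_prop : Continuous fun ξ : ℝ => 1 + ξ ^ 2).rpow_const fun ξ => .inl (by positivity)
  exact (weight_continuous.smul (continuous_fourierT hf)).aestronglyMeasurable

lemma memSobolev_iff_memLp :
    MemSobolev s f ↔ Integrable f ∧ MemLp (weightedFourierT s f) 2 := by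
  refine and_congr_right fun hf => ?_
  rw [memLp_two_iff_integrable_sq_norm (aestronglyMeasurable_weightedFourierT hf)]
  simp only [norm_weightedFourierT_sq]

lemma sobolevNorm_eq_lpNorm (hf : Integrable f) :
    sobolevNorm s f = lpNorm (weightedFourierT s f) 2 volume := by
  rw [lpNorm_eq_integral_norm_rpow_toReal (by simp) (by simp)
    (aestronglyMeasurable_weightedFourierT hf)]
  simp [sobolevNorm, Real.sqrt_eq_rpow, norm_weightedFourierT_sq]

lemma weightedFourierT_add (hf : Integrable f) (hg : Integrable g) :
    weightedFourierT s (f + g) = weightedFourierT s f + weightedFourierT s g := by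
  ext ξ
  simp only [weightedFourierT, fourierT_add hf hg, Pi.add_apply, smul_add]

lemma weightedFourierT_smul (c : ℂ) (f : ℝ → ℂ) :
    weightedFourierT s (c • f) = c • weightedFourierT s f := by
  ext ξ
  simp only [weightedFourierT, fourierT_smul, Pi.smul_apply, smul_comm c]

lemma MemSobolev.add (hf : MemSobolev s f) (hg : MemSobolev s g) : MemSobolev s (f + g) := by
  refine memSobolev_iff_memLp.2 ⟨hf.1.add hg.1, ?_⟩
  rw [weightedFourierT_add hf.1 hg.1]
  exact (memSobolev_iff_memLp.1 hf).2.add (memSobolev_iff_memLp.1 hg).2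

lemma MemSobolev.const_smul (hf : MemSobolev s f) (c : ℂ) : MemSobolev s (c • f) := by
  refine memSobolev_iff_memLp.2 ⟨hf.1.smul c, ?_⟩
  rw [weightedFourierT_smul]
  exact (memSobolev_iff_memLp.1 hf).2.const_smul c

lemma sobolevNorm_add_le (hf : MemSobolev s f) (hg : MemSobolev s g) :
    sobolevNorm s (f + g) ≤ sobolevNorm s f + sobolevNorm s g := by
  rw [sobolevNorm_eq_lpNorm (hf.1.add hg.1), sobolevNorm_eq_lpNorm hf.1, sobolevNorm_eq_lpNorm hg.1,
    weightedFourierT_add hf.1 hg.1]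
  exact lpNorm_add_le (memSobolev_iff_memLp.1 hf).2 one_le_two

lemma sobolevNorm_smul (c : ℂ) (hf : Integrable f) :
    sobolevNorm s (c • f) = ‖c‖ * sobolevNorm s f := by
  rw [sobolevNorm_eq_lpNorm (hf.smul c), sobolevNorm_eq_lpNorm hf, weightedFourierT_smul,
    lpNorm_const_smul, coe_nnnorm]

lemma memSobolev_zero : MemSobolev s (0 : ℝ → ℂ) := by
  simp [MemSobolev, fourierT]

lemma sobolevNorm_zero : sobolevNorm s (0 : ℝ → ℂ) = 0 := by
  simp [sobolevNorm, fourierT]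

lemma memSobolev_schwartzMap (s : ℝ) (ψ : 𝓢(ℝ, ℂ)) : MemSobolev s ψ := by
  obtain ⟨ψhat, coe_ψhat⟩ := exists_schwartzMap_eq_fourierT ψ
  have weight_growth : (fun ξ : ℝ => (1 + ‖ξ‖ ^ 2) ^ (s / 2)).HasTemperateGrowth :=
    Function.hasTemperateGrowth_one_add_norm_sq_rpow ℝ (s / 2)
  have weightedFourierT_eq : weightedFourierT s ψ =
      SchwartzMap.smulLeftCLM ℂ (fun ξ : ℝ => (1 + ‖ξ‖ ^ 2) ^ (s / 2)) ψhat := by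
    ext ξ
    rw [SchwartzMap.smulLeftCLM_apply_apply weight_growth, coe_ψhat, weightedFourierT,
      Real.norm_eq_abs, sq_abs]
  refine memSobolev_iff_memLp.2 ⟨ψ.integrable, ?_⟩
  rw [weightedFourierT_eq]
  exact SchwartzMap.memLp _ 2 volume

lemma norm_weightedFourierT_mul_cexp_le (hs : 0 ≤ s) (f : ℝ → ℂ) (b ξ : ℝ) :
    ‖weightedFourierT s (fun x => f x * Complex.exp (Complex.I * x * b)) ξ‖ ≤
      (2 * (1 + b ^ 2)) ^ (s / 2) * ‖weightedFourierT s f (ξ - b)‖ := by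
  have peetre : 1 + ξ ^ 2 ≤ 2 * (1 + b ^ 2) * (1 + (ξ - b) ^ 2) := by
    nlinarith [sq_nonneg (ξ - 2 * b), sq_nonneg (b * (ξ - b))]
  rw [norm_weightedFourierT, norm_weightedFourierT, fourierT_mul_cexp, ← mul_assoc,
    ← Real.mul_rpow (by positivity) (by positivity)]
  gcongr

lemma MemSobolev.mul_cexp (hs : 0 ≤ s) (hf : MemSobolev s f) (b : ℝ) :
    MemSobolev s fun x => f x * Complex.exp (Complex.I * x * b) := by
  have hint := integrable_mul_cexp hf.1 b
  have translate_memLp := (memSobolev_iff_memLp.1 hf).2.comp_measurePreserving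
    (measurePreserving_sub_right volume b)
  exact memSobolev_iff_memLp.2 ⟨hint, translate_memLp.of_le_mul
    (aestronglyMeasurable_weightedFourierT hint)
    (ae_of_all _ (norm_weightedFourierT_mul_cexp_le hs f b))⟩

lemma sobolevNorm_mul_cexp_le (hs : 0 ≤ s) (hf : MemSobolev s f) (b : ℝ) :
    sobolevNorm s (fun x => f x * Complex.exp (Complex.I * x * b)) ≤
      (2 * (1 + b ^ 2)) ^ (s / 2) * sobolevNorm s f := by
  have integrand_le (ξ : ℝ) :
      ‖weightedFourierT s (fun x => f x * Complex.exp (Complex.I * x * b)) ξ‖ ^ 2 ≤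
        ((2 * (1 + b ^ 2)) ^ (s / 2)) ^ 2 * ‖weightedFourierT s f (ξ - b)‖ ^ 2 := by
    rw [← mul_pow]
    gcongr
    exact norm_weightedFourierT_mul_cexp_le hs f b ξ
  simp only [norm_weightedFourierT_sq] at integrand_le
  have integral_le := integral_mono (hf.mul_cexp hs b).2
    ((hf.2.comp_sub_right b).const_mul _) integrand_le
  rw [integral_const_mul, integral_sub_right_eq_self
    (fun ξ => (1 + ξ ^ 2) ^ s * ‖fourierT f ξ‖ ^ 2)] at integral_le
  refine (Real.sqrt_le_sqrt integral_le).trans_eq ?_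
  rw [Real.sqrt_mul (by positivity), Real.sqrt_sq (by positivity), sobolevNorm]

end Sobolev

section SobolevBounded

variable {ι : Type*} {s : ℝ}

/-- The families `F` of functions in `H^s` with `‖F i‖_{H^s} = O(w i)`, uniformly in the index. -/
noncomputable def sobolevBounded (s : ℝ) (w : ι → ℝ) : Submodule ℂ (ι → ℝ → ℂ) where
  carrier := {F | ∃ C, ∀ i, MemSobolev s (F i) ∧ sobolevNorm s (F i) ≤ C * w i}
  zero_mem' := ⟨0, fun _ => ⟨memSobolev_zero, by simp [sobolevNorm_zero]⟩⟩
  add_mem' := by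
    rintro F G ⟨C, hF⟩ ⟨D, hG⟩
    refine ⟨C + D, fun i => ⟨(hF i).1.add (hG i).1, ?_⟩⟩
    calc sobolevNorm s (F i + G i) ≤ sobolevNorm s (F i) + sobolevNorm s (G i) :=
          sobolevNorm_add_le (hF i).1 (hG i).1
      _ ≤ C * w i + D * w i := add_le_add (hF i).2 (hG i).2
      _ = (C + D) * w i := by ring
  smul_mem' := by
    rintro c F ⟨C, hF⟩
    refine ⟨‖c‖ * C, fun i => ⟨(hF i).1.const_smul c, ?_⟩⟩
    rw [Pi.smul_apply, sobolevNorm_smul c (hF i).1.1, mul_assoc]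
    exact mul_le_mul_of_nonneg_left (hF i).2 (norm_nonneg c)

variable {t : ι → ℝ} {f : ℝ → ℂ} {e r : ℝ}

lemma rpow_le_one_add_rpow {x : ℝ} (hx : 1 ≤ x) (he : e ≤ max 0 r) : x ^ e ≤ 1 + x ^ r := by
  rcases le_max_iff.1 he with he | he
  · exact le_add_of_le_of_nonneg (Real.rpow_le_one_of_one_le_of_nonpos hx he) (by positivity)
  · exact le_add_of_nonneg_of_le zero_le_one (Real.rpow_le_rpow_of_exponent_le hx he)

lemma rpow_mul_mem_sobolevBounded (ht : ∀ i, 1 ≤ t i) (hf : MemSobolev s f)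
    (he : e ≤ max 0 r) :
    (fun i x => ((t i ^ e : ℝ) : ℂ) * f x) ∈ sobolevBounded s fun i => 1 + t i ^ r := by
  refine ⟨sobolevNorm s f, fun i => ⟨hf.const_smul _, ?_⟩⟩
  have ht0 : 0 ≤ t i := zero_le_one.trans (ht i)
  calc sobolevNorm s (((t i ^ e : ℝ) : ℂ) • f) = t i ^ e * sobolevNorm s f := by
        rw [sobolevNorm_smul _ hf.1, Complex.norm_of_nonneg (by positivity)]
    _ ≤ (1 + t i ^ r) * sobolevNorm s f :=
        mul_le_mul_of_nonneg_right (rpow_le_one_add_rpow (ht i) he) (Real.sqrt_nonneg _)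
    _ = sobolevNorm s f * (1 + t i ^ r) := mul_comm _ _

lemma two_mul_one_add_sq_rpow_le {x : ℝ} (hs : 0 ≤ s) (hx : 1 ≤ x) (k : ℝ) :
    (2 * (1 + (k * x) ^ 2)) ^ (s / 2) ≤ (2 * (1 + k ^ 2)) ^ (s / 2) * x ^ s := by
  calc (2 * (1 + (k * x) ^ 2)) ^ (s / 2) ≤ (2 * (1 + k ^ 2) * x ^ 2) ^ (s / 2) := by
        refine Real.rpow_le_rpow (by positivity) ?_ (by positivity)
        nlinarith [one_le_pow₀ hx (n := 2)]
    _ = (2 * (1 + k ^ 2)) ^ (s / 2) * x ^ s := by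
        rw [Real.mul_rpow (by positivity) (by positivity), ← Real.rpow_natCast_mul (by positivity)]
        rw [Nat.cast_ofNat, mul_div_cancel₀ s two_ne_zero]

lemma rpow_mul_cexp_mem_sobolevBounded (hs : 0 ≤ s) (ht : ∀ i, 1 ≤ t i) (hf : MemSobolev s f)
    (k : ℝ) (he : e + s ≤ max 0 r) :
    (fun i x => ((t i ^ e : ℝ) : ℂ) * (f x * Complex.exp (Complex.I * x * (k * t i : ℝ)))) ∈
      sobolevBounded s fun i => 1 + t i ^ r := by
  set K := (2 * (1 + k ^ 2)) ^ (s / 2)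
  refine ⟨K * sobolevNorm s f, fun i => ⟨(hf.mul_cexp hs _).const_smul _, ?_⟩⟩
  have ht0 : 0 < t i := zero_lt_one.trans_le (ht i)
  have sobolevNorm_nonneg : 0 ≤ sobolevNorm s f := Real.sqrt_nonneg _
  calc sobolevNorm s
        (((t i ^ e : ℝ) : ℂ) • fun x => f x * Complex.exp (Complex.I * x * (k * t i : ℝ)))
      = t i ^ e * sobolevNorm s fun x => f x * Complex.exp (Complex.I * x * (k * t i : ℝ)) := by
        rw [sobolevNorm_smul _ (hf.mul_cexp hs _).1, Complex.norm_of_nonneg (by positivity)]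
    _ ≤ t i ^ e * (K * t i ^ s * sobolevNorm s f) := by
        gcongr
        exact (sobolevNorm_mul_cexp_le hs hf _).trans <|
          mul_le_mul_of_nonneg_right (two_mul_one_add_sq_rpow_le hs (ht i) k) sobolevNorm_nonneg
    _ = K * sobolevNorm s f * t i ^ (e + s) := by
        rw [Real.rpow_add ht0]
        ring
    _ ≤ K * sobolevNorm s f * (1 + t i ^ r) := by
        gcongr
        exact rpow_le_one_add_rpow (ht i) he

lemma rpow_mul_cos_mem_sobolevBounded (hs : 0 ≤ s) (ht : ∀ i, 1 ≤ t i) (hf : MemSobolev s f)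
    (k : ℝ) (he : e + s ≤ max 0 r) :
    (fun i x => ((t i ^ e : ℝ) : ℂ) * (f x * Real.cos (k * t i * x))) ∈
      sobolevBounded s fun i => 1 + t i ^ r := by
  have exp_mem (k : ℝ) := rpow_mul_cexp_mem_sobolevBounded hs ht hf k he
  convert Submodule.smul_mem _ (1 / 2 : ℂ) (add_mem (exp_mem k) (exp_mem (-k))) using 1
  ext i x
  simp only [Complex.ofReal_cos, Complex.cos, Complex.ofReal_mul, neg_mul, one_div,
    Complex.ofReal_neg, mul_neg, Pi.smul_apply, Pi.add_apply, smul_eq_mul]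
  ring_nf

lemma rpow_mul_sin_mem_sobolevBounded (hs : 0 ≤ s) (ht : ∀ i, 1 ≤ t i) (hf : MemSobolev s f)
    (k : ℝ) (he : e + s ≤ max 0 r) :
    (fun i x => ((t i ^ e : ℝ) : ℂ) * (f x * Real.sin (k * t i * x))) ∈
      sobolevBounded s fun i => 1 + t i ^ r := by
  have exp_mem (k : ℝ) := rpow_mul_cexp_mem_sobolevBounded hs ht hf k he
  convert Submodule.smul_mem _ (Complex.I / 2) (sub_mem (exp_mem (-k)) (exp_mem k)) using 1
  ext i x
  simp only [Complex.ofReal_sin, Complex.sin, Complex.ofReal_mul, neg_mul, Complex.ofReal_neg,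
    mul_neg, Pi.smul_apply, Pi.sub_apply, smul_eq_mul]
  ring_nf

end SobolevBounded

section HighLowWave

/-- The superposition `t^{-s} φ(x) sin(k t x) + t⁻¹ φ(x)` of a high-frequency and a low-frequency
wave; `u_0^n` is the case `k = 17/12`, `t = 2^n`. -/
noncomputable def highLowWave (s k : ℝ) (φ : ℝ → ℂ) (t x : ℝ) : ℂ :=
  ((t ^ (-s) * Real.sin (k * t * x) : ℝ) : ℂ) * φ x + ((t ^ (-1 : ℝ) : ℝ) : ℂ) * φ x

lemma fn_add_gn_eq_highLowWave (s : ℝ) (φ : ℝ → ℂ) (n : ℕ) :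
    (fun x => fn s φ n x + gn φ n x) = highLowWave s (17 / 12) φ (2 ^ n) := by
  ext x
  simp only [fn, gn, highLowWave, ← Real.rpow_natCast_mul zero_le_two, mul_neg, mul_one, neg_mul]

variable {s k t x : ℝ} {φ : ℝ → ℂ}

lemma deriv_highLowWave (hφ : DifferentiableAt ℝ φ x) :
    deriv (highLowWave s k φ t) x =
      ((t ^ (-s) * (Real.cos (k * t * x) * (k * t)) : ℝ) : ℂ) * φ x +
        ((t ^ (-s) * Real.sin (k * t * x) : ℝ) : ℂ) * deriv φ x +
        ((t ^ (-1 : ℝ) : ℝ) : ℂ) * deriv φ x := by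
  have phase : HasDerivAt (fun y : ℝ => k * t * y) (k * t) x := hasDerivAt_const_mul (k * t)
  have wave := (phase.sin.const_mul (t ^ (-s))).ofReal_comp
  exact ((wave.mul hφ.hasDerivAt).add (hφ.hasDerivAt.const_mul _)).deriv

lemma deriv_highLowWave_sq (ht : 0 < t) (hφ : DifferentiableAt ℝ φ x) :
    deriv (highLowWave s k φ t) x ^ 2 =
      ((t ^ (-2 : ℝ) : ℝ) : ℂ) * deriv φ x ^ 2
      + (k ^ 2 / 2 : ℂ) * (((t ^ (2 - 2 * s) : ℝ) : ℂ) * φ x ^ 2)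
      + (1 / 2 : ℂ) * (((t ^ (-2 * s) : ℝ) : ℂ) * deriv φ x ^ 2)
      + (2 * k : ℂ) * (((t ^ (-s) : ℝ) : ℂ) * (φ x * deriv φ x * Real.cos (k * t * x)))
      + (2 : ℂ) * (((t ^ (-1 - s) : ℝ) : ℂ) * (deriv φ x ^ 2 * Real.sin (k * t * x)))
      + (k ^ 2 / 2 : ℂ) * (((t ^ (2 - 2 * s) : ℝ) : ℂ) * (φ x ^ 2 * Real.cos (2 * k * t * x)))
      + (k : ℂ) * (((t ^ (1 - 2 * s) : ℝ) : ℂ) * (φ x * deriv φ x * Real.sin (2 * k * t * x)))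
      + (-1 / 2 : ℂ) * (((t ^ (-2 * s) : ℝ) : ℂ) * (deriv φ x ^ 2 * Real.cos (2 * k * t * x))) := by
  have cos_double : Real.cos (2 * k * t * x) = 2 * Real.cos (k * t * x) ^ 2 - 1 := by
    rw [← Real.cos_two_mul, mul_assoc, mul_assoc, mul_assoc]
  have sin_double : Real.sin (2 * k * t * x) = 2 * Real.sin (k * t * x) * Real.cos (k * t * x) := by
    rw [← Real.sin_two_mul, mul_assoc, mul_assoc, mul_assoc]
  have sin_sq : (Real.sin (k * t * x) : ℂ) ^ 2 = 1 - (Real.cos (k * t * x) : ℂ) ^ 2 :=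
    mod_cast Real.sin_sq (k * t * x)
  have rpow_neg_two_mul : t ^ (-2 * s) = (t ^ (-s)) ^ 2 := by
    rw [← Real.rpow_mul_natCast ht.le, Nat.cast_ofNat, neg_mul, mul_comm 2 s, neg_mul]
  have rpow_neg_two : t ^ (-2 : ℝ) = t⁻¹ ^ 2 := by
    rw [Real.rpow_neg ht.le, Real.rpow_two, inv_pow]
  have ht0 : (t : ℂ) ≠ 0 := mod_cast ht.ne'
  rw [deriv_highLowWave hφ, cos_double, sin_double, sub_eq_add_neg 2, sub_eq_add_neg 1,
    sub_eq_add_neg (-1), Real.rpow_add ht, Real.rpow_add ht, Real.rpow_add ht, ← neg_mul,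
    rpow_neg_two_mul, rpow_neg_two, Real.rpow_neg_one, Real.rpow_two, Real.rpow_one]
  push_cast at sin_sq ⊢
  field_simp
  linear_combination (2 * t ^ 2 * ((t ^ (-s) : ℝ) : ℂ) ^ 2 * deriv φ x ^ 2) * sin_sq

lemma deriv_highLowWave_sq_mem_sobolevBounded {ι : Type*} {t : ι → ℝ} (hs : 0 ≤ s)
    (ht : ∀ i, 1 ≤ t i) (k : ℝ) (hφ : Differentiable ℝ φ)
    (hsq : MemSobolev s fun x => φ x ^ 2)
    (hmul : MemSobolev s fun x => φ x * deriv φ x)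
    (hderiv_sq : MemSobolev s fun x => deriv φ x ^ 2) :
    (fun i x => deriv (highLowWave s k φ (t i)) x ^ 2) ∈
      sobolevBounded s fun i => 1 + t i ^ (2 - s) := by
  have expansion := funext₂ fun i x => deriv_highLowWave_sq (s := s) (k := k)
    (zero_lt_one.trans_le (ht i)) (hφ x)
  rw [expansion]
  have low {f : ℝ → ℂ} (hf : MemSobolev s f) (c : ℂ) {e : ℝ} (he : e ≤ max 0 (2 - s)) :=
    Submodule.smul_mem _ c (rpow_mul_mem_sobolevBounded ht hf he)
  have cosine {f : ℝ → ℂ} (hf : MemSobolev s f) (c : ℂ) (k : ℝ) {e : ℝ}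
      (he : e + s ≤ max 0 (2 - s)) :=
    Submodule.smul_mem _ c (rpow_mul_cos_mem_sobolevBounded hs ht hf k he)
  have sine {f : ℝ → ℂ} (hf : MemSobolev s f) (c : ℂ) (k : ℝ) {e : ℝ}
      (he : e + s ≤ max 0 (2 - s)) :=
    Submodule.smul_mem _ c (rpow_mul_sin_mem_sobolevBounded hs ht hf k he)
  refine add_mem (add_mem (add_mem (add_mem (add_mem (add_mem (add_mem ?_ ?_) ?_) ?_) ?_) ?_) ?_) ?_
  · exact rpow_mul_mem_sobolevBounded ht hderiv_sq (le_max_of_le_left (by norm_num))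
  · exact low hsq _ (le_max_of_le_right (by linarith))
  · exact low hderiv_sq _ (le_max_of_le_left (by linarith))
  · exact cosine hmul _ k (le_max_of_le_left (by linarith))
  · exact sine hderiv_sq _ k (le_max_of_le_left (by linarith))
  · exact cosine hsq _ (2 * k) (le_max_of_le_right (by linarith))
  · exact sine hmul _ (2 * k) (le_max_of_le_right (by linarith))
  · exact cosine hderiv_sq _ (2 * k) (le_max_of_le_left (by linarith))

end HighLowWave

theorem sq_deriv_u0n_bound_general {s : ℝ} (hs : 0 ≤ s) (Φ : 𝓢(ℝ, ℂ)) :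
    ∃ C : ℝ, 0 < C ∧ ∀ n : ℕ,
      MemSobolev s (fun x => (deriv (fun y => fn s Φ n y + gn Φ n y) x) ^ 2) ∧
        sobolevNorm s (fun x => (deriv (fun y => fn s Φ n y + gn Φ n y) x) ^ 2)
          ≤ C * (1 + (2 : ℝ) ^ (-(n : ℝ) * (s - 2))) := by
  let Φ' : 𝓢(ℝ, ℂ) := SchwartzMap.derivCLM ℂ ℂ Φ
  have mul_mem (f g : 𝓢(ℝ, ℂ)) : MemSobolev s fun x => f x * g x :=
    memSobolev_schwartzMap s (SchwartzMap.pairing (ContinuousLinearMap.mul ℂ ℂ) f g)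
  obtain ⟨C, hC⟩ := deriv_highLowWave_sq_mem_sobolevBounded (t := fun n : ℕ => 2 ^ n) hs
    (fun n => one_le_pow₀ one_le_two) (17 / 12) Φ.differentiable
    (by simpa only [sq] using mul_mem Φ Φ) (mul_mem Φ Φ')
    (by simpa only [sq] using! mul_mem Φ' Φ')
  refine ⟨max C 1, by positivity, fun n => ?_⟩
  have weight_eq : ((2 : ℝ) ^ n) ^ (2 - s) = 2 ^ (-(n : ℝ) * (s - 2)) := by
    rw [← Real.rpow_natCast_mul zero_le_two, neg_mul, ← mul_neg, neg_sub]
  rw [fn_add_gn_eq_highLowWave, ← weight_eq]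
  exact ⟨(hC n).1, (hC n).2.trans (by gcongr; exact le_max_left C 1)⟩

/-- For `s > 3/2` there is `C` (independent of `n`) such that, with `u_0^n = f_n + g_n`,
`‖(∂_x u_0^n)²‖_{H^s} ≤ C(1 + 2^{-n(s-2)})` for all sufficiently large `n`. -/
theorem sq_deriv_u0n_bound (s : ℝ) (hs : 3 / 2 < s) (φhat : ℝ → ℝ) (φ : ℝ → ℂ)
    (hφ : CutoffPair φhat φ) :
    ∃ C : ℝ, 0 < C ∧ ∃ N : ℕ, ∀ n : ℕ, N ≤ n →
      sobolevNorm s (fun x => (deriv (fun y => fn s φ n y + gn φ n y) x) ^ 2)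
        ≤ C * (1 + (2 : ℝ) ^ (-(n : ℝ) * (s - 2))) := by
  obtain ⟨Φ, rfl⟩ := hφ.exists_schwartzMap_eq
  obtain ⟨C, hC, hbound⟩ := sq_deriv_u0n_bound_general (by linarith : 0 ≤ s) Φ
  exact ⟨C, hC, 0, fun n _ => (hbound n).2⟩
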